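/- arXiv:1412.6461 — 3 statements merged into one kernel-verified Lean document; each statement's English description precedes it below -/
import Mathlib

section
/- Let u : ℝ³ → ℝ be a smooth solution of the universal hierarchy equation u_yy = u_z·u_xy − u_y·u_xz (coordinates (x,y,z), subscripts denoting partial derivatives). Then the function φ := u_z + u_x + y·u_y + u satisfies the linearized equation φ_yy = u_z·φ_xy + u_xy·φ_z − u_y·φ_xz − u_xz·φ_y at every point of ℝ³ (i.e., φ is a symmetry of the universal hierarchy equation). -/
/-- Partial derivative of a function on `ℝ³` in the direction `v`. -/
noncomputable def pd (v : ℝ × ℝ × ℝ) (f : ℝ × ℝ × ℝ → ℝ) : ℝ × ℝ × ℝ → ℝ :=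
  fun p => fderiv ℝ f p v

/-- Coordinates are `(x, y, z)`. -/
noncomputable def dx : (ℝ × ℝ × ℝ → ℝ) → ℝ × ℝ × ℝ → ℝ := pd (1, 0, 0)
noncomputable def dy : (ℝ × ℝ × ℝ → ℝ) → ℝ × ℝ × ℝ → ℝ := pd (0, 1, 0)
noncomputable def dz : (ℝ × ℝ × ℝ → ℝ) → ℝ × ℝ × ℝ → ℝ := pd (0, 0, 1)

/-- The symmetry `φ = u_z + u_x + y·u_y + u` of the universal hierarchy equation. -/
noncomputable def phi (u : ℝ × ℝ × ℝ → ℝ) : ℝ × ℝ × ℝ → ℝ :=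
  fun p => dz u p + dx u p + p.2.1 * dy u p + u p

/-!
Put `F u = u_yy - u_z u_xy + u_y u_xz` and let `L_u` be its linearization at `u`. Every `u`,
solution or not, satisfies `L_u φ = (∂_z + ∂_x + y ∂_y + 3) (F u)`, and the right side vanishes
where `F u` vanishes identically. The identity splits along the symmetries that generate the
summands of `φ`. The translations give `L_u (∂_v u) = ∂_v (F u)`, which is the chain rule. The
scaling `u ↦ λ u(x, λ y, z)`, under which `F` is homogeneous of degree `3`, gives
`L_u (y u_y + u) = y ∂_y (F u) + 3 F u`.
-/

open scoped Topology

theorem eventually_differentiableAt {E F : Type*} [NormedAddCommGroup E] [NormedSpace ℝ E]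
    [NormedAddCommGroup F] [NormedSpace ℝ F] {f : E → F} {p : E} (hf : ContDiffAt ℝ 1 f p) :
    ∀ᶠ q in 𝓝 p, DifferentiableAt ℝ f q :=
  (hf.eventually (by simp)).mono fun _ hq => hq.differentiableAt one_ne_zero

section DirectionalDerivatives

variable {f g : ℝ × ℝ × ℝ → ℝ} {p : ℝ × ℝ × ℝ} (v w : ℝ × ℝ × ℝ)

theorem contDiffAt_pd {m n : WithTop ℕ∞} (hf : ContDiffAt ℝ n f p) (hmn : m + 1 ≤ n) :
    ContDiffAt ℝ m (pd v f) p :=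
  (hf.fderiv_right hmn).clm_apply contDiffAt_const

theorem differentiableAt_pd (hf : ContDiffAt ℝ 2 f p) : DifferentiableAt ℝ (pd v f) p :=
  (contDiffAt_pd (m := 1) v hf one_add_one_eq_two.le).differentiableAt one_ne_zero

theorem pd_congr (h : f =ᶠ[𝓝 p] g) : pd v f p = pd v g p := by
  rw [pd, pd, h.fderiv_eq]

theorem pd_add (hf : DifferentiableAt ℝ f p) (hg : DifferentiableAt ℝ g p) :
    pd v (f + g) p = pd v f p + pd v g p := by
  simp [pd, fderiv_add hf hg]

theorem pd_sub (hf : DifferentiableAt ℝ f p) (hg : DifferentiableAt ℝ g p) :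
    pd v (f - g) p = pd v f p - pd v g p := by
  simp [pd, fderiv_sub hf hg]

theorem pd_mul (hf : DifferentiableAt ℝ f p) (hg : DifferentiableAt ℝ g p) :
    pd v (f * g) p = f p * pd v g p + g p * pd v f p := by
  simp [pd, fderiv_mul hf hg]

theorem pd_clm_mul (l : ℝ × ℝ × ℝ →L[ℝ] ℝ) (hf : DifferentiableAt ℝ f p) :
    pd v (⇑l * f) p = l p * pd v f p + l v * f p := by
  rw [pd_mul v l.differentiableAt hf, pd, pd, l.fderiv, mul_comm (f p)]

theorem pd_pd_add (hf : ContDiffAt ℝ 2 f p) (hg : ContDiffAt ℝ 2 g p) :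
    pd w (pd v (f + g)) p = pd w (pd v f) p + pd w (pd v g) p := by
  have first_order : pd v (f + g) =ᶠ[𝓝 p] pd v f + pd v g := by
    filter_upwards [eventually_differentiableAt (hf.of_le one_le_two),
      eventually_differentiableAt (hg.of_le one_le_two)]
      with q hfq hgq using pd_add v hfq hgq
  rw [pd_congr w first_order, pd_add w (differentiableAt_pd v hf) (differentiableAt_pd v hg)]

theorem pd_pd_clm_mul (l : ℝ × ℝ × ℝ →L[ℝ] ℝ) (hf : ContDiffAt ℝ 2 f p) :
    pd w (pd v (⇑l * f)) p = l p * pd w (pd v f) p + l w * pd v f p + l v * pd w f p := by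
  have first_order : pd v (⇑l * f) =ᶠ[𝓝 p] ⇑l * pd v f + l v • f := by
    filter_upwards [eventually_differentiableAt (hf.of_le one_le_two)] with q hfq
      using pd_clm_mul v l hfq
  have hf₁ : DifferentiableAt ℝ f p := hf.differentiableAt two_ne_zero
  have hvf : DifferentiableAt ℝ (pd v f) p := differentiableAt_pd v hf
  rw [pd_congr w first_order, pd_add w (l.differentiableAt.mul hvf) (hf₁.const_smul (l v)),
    pd_clm_mul w l hvf]
  simp [pd, fderiv_const_smul hf₁]

theorem pd_pd_eq_fderiv_fderiv (hf : ContDiffAt ℝ 2 f p) :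
    pd v (pd w f) p = fderiv ℝ (fderiv ℝ f) p v w := by
  have hf' : DifferentiableAt ℝ (fderiv ℝ f) p :=
    (hf.fderiv_right (m := 1) one_add_one_eq_two.le).differentiableAt one_ne_zero
  change fderiv ℝ (fun q => fderiv ℝ f q w) p v = _
  simp [fderiv_clm_apply hf' (differentiableAt_const w)]

theorem pd_comm (hf : ContDiffAt ℝ 2 f p) : pd v (pd w f) p = pd w (pd v f) p := by
  rw [pd_pd_eq_fderiv_fderiv v w hf, pd_pd_eq_fderiv_fderiv w v hf]
  exact hf.isSymmSndFDerivAt (by simp) v w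

theorem pd_pd_pd_rotate (a : ℝ × ℝ × ℝ) (hf : ContDiffAt ℝ 3 f p) :
    pd a (pd v (pd w f)) p = pd v (pd w (pd a f)) p := by
  have inner_comm : pd a (pd w f) =ᶠ[𝓝 p] pd w (pd a f) := by
    filter_upwards [hf.eventually (by simp)] with q hq
      using pd_comm a w (hq.of_le (by norm_num))
  rw [pd_comm a v (contDiffAt_pd w hf (by norm_num)), pd_congr v inner_comm]

end DirectionalDerivatives

/-- The universal hierarchy operator `F u = u_yy - u_z u_xy + u_y u_xz`, whose zeros are the
solutions of the universal hierarchy equation. -/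
noncomputable def universalHierarchy (u : ℝ × ℝ × ℝ → ℝ) : ℝ × ℝ × ℝ → ℝ :=
  dy (dy u) - dz u * dy (dx u) + dy u * dz (dx u)

/-- The linearization `L_u` of `universalHierarchy` at `u`, applied to `φ`; its kernel consists of
the infinitesimal symmetries at a solution `u`. -/
noncomputable def linearizedUniversalHierarchy (u φ : ℝ × ℝ × ℝ → ℝ) : ℝ × ℝ × ℝ → ℝ :=
  dy (dy φ) - dz u * dy (dx φ) - dy (dx u) * dz φ + dy u * dz (dx φ) + dz (dx u) * dy φ

/-- The coordinate function `y`, as a continuous linear functional so that `pd_clm_mul` applies to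
the coefficient of `u_y` in `phi u`. -/
def yCoord : ℝ × ℝ × ℝ →L[ℝ] ℝ :=
  (ContinuousLinearMap.fst ℝ ℝ ℝ).comp (ContinuousLinearMap.snd ℝ ℝ (ℝ × ℝ))

section Linearization

variable {u φ ψ : ℝ × ℝ × ℝ → ℝ} {p : ℝ × ℝ × ℝ}

theorem linearizedUniversalHierarchy_add (hφ : ContDiffAt ℝ 2 φ p) (hψ : ContDiffAt ℝ 2 ψ p) :
    linearizedUniversalHierarchy u (φ + ψ) p =
      linearizedUniversalHierarchy u φ p + linearizedUniversalHierarchy u ψ p := by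
  have hφ₁ : DifferentiableAt ℝ φ p := hφ.differentiableAt two_ne_zero
  have hψ₁ : DifferentiableAt ℝ ψ p := hψ.differentiableAt two_ne_zero
  simp only [linearizedUniversalHierarchy, dx, dy, dz, Pi.add_apply, Pi.sub_apply, Pi.mul_apply,
    pd_pd_add _ _ hφ hψ, pd_add _ hφ₁ hψ₁]
  ring

theorem linearizedUniversalHierarchy_yCoord_mul (hφ : ContDiffAt ℝ 2 φ p) :
    linearizedUniversalHierarchy u (⇑yCoord * φ) p =
      p.2.1 * linearizedUniversalHierarchy u φ p
        + (2 * dy φ p - dz u p * dx φ p + dz (dx u) p * φ p) := by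
  have hφ₁ : DifferentiableAt ℝ φ p := hφ.differentiableAt two_ne_zero
  simp only [linearizedUniversalHierarchy, dx, dy, dz, Pi.add_apply, Pi.sub_apply, Pi.mul_apply,
    pd_pd_clm_mul _ _ yCoord hφ, pd_clm_mul _ yCoord hφ₁]
  simp only [yCoord, ContinuousLinearMap.comp_apply, ContinuousLinearMap.coe_fst',
    ContinuousLinearMap.coe_snd']
  ring

theorem linearizedUniversalHierarchy_self :
    linearizedUniversalHierarchy u u p = 2 * universalHierarchy u p - dy (dy u) p := by
  simp only [linearizedUniversalHierarchy, universalHierarchy, Pi.add_apply, Pi.sub_apply,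
    Pi.mul_apply]
  ring

theorem linearizedUniversalHierarchy_pd (v : ℝ × ℝ × ℝ) (hu : ContDiffAt ℝ 3 u p) :
    linearizedUniversalHierarchy u (pd v u) p = pd v (universalHierarchy u) p := by
  have hu₂ : ContDiffAt ℝ 2 u p := hu.of_le (by norm_num)
  have d₁ (a : ℝ × ℝ × ℝ) : DifferentiableAt ℝ (pd a u) p := differentiableAt_pd a hu₂
  have d₂ (a b : ℝ × ℝ × ℝ) : DifferentiableAt ℝ (pd a (pd b u)) p :=
    differentiableAt_pd a (contDiffAt_pd b hu (by norm_num))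
  simp only [linearizedUniversalHierarchy, universalHierarchy, dx, dy, dz, Pi.add_apply,
    Pi.sub_apply, Pi.mul_apply]
  rw [pd_add v ((d₂ _ _).sub ((d₁ _).mul (d₂ _ _))) ((d₁ _).mul (d₂ _ _)),
    pd_sub v (d₂ _ _) ((d₁ _).mul (d₂ _ _)), pd_mul v (d₁ _) (d₂ _ _), pd_mul v (d₁ _) (d₂ _ _)]
  simp only [pd_pd_pd_rotate _ _ v hu, pd_comm v _ hu₂]
  ring

theorem linearizedUniversalHierarchy_scaling (hu : ContDiffAt ℝ 3 u p) :
    linearizedUniversalHierarchy u (⇑yCoord * dy u + u) p =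
      p.2.1 * dy (universalHierarchy u) p + 3 * universalHierarchy u p := by
  have hu₂ : ContDiffAt ℝ 2 u p := hu.of_le (by norm_num)
  have hy : ContDiffAt ℝ 2 (dy u) p := contDiffAt_pd _ hu (by norm_num)
  have translation :
      linearizedUniversalHierarchy u (dy u) p = dy (universalHierarchy u) p :=
    linearizedUniversalHierarchy_pd _ hu
  have mixed : dx (dy u) p = dy (dx u) p := pd_comm _ _ hu₂
  have hy_mul : ContDiffAt ℝ 2 (⇑yCoord * dy u) p := yCoord.contDiff.contDiffAt.mul hy
  rw [linearizedUniversalHierarchy_add hy_mul hu₂,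
    linearizedUniversalHierarchy_yCoord_mul hy, linearizedUniversalHierarchy_self, translation,
    mixed]
  simp only [universalHierarchy, Pi.add_apply, Pi.sub_apply, Pi.mul_apply]
  ring

theorem linearizedUniversalHierarchy_phi (hu : ContDiffAt ℝ 3 u p) :
    linearizedUniversalHierarchy u (phi u) p =
      dz (universalHierarchy u) p + dx (universalHierarchy u) p
        + (p.2.1 * dy (universalHierarchy u) p + 3 * universalHierarchy u p) := by
  have hu₂ : ContDiffAt ℝ 2 u p := hu.of_le (by norm_num)
  have hx : ContDiffAt ℝ 2 (dx u) p := contDiffAt_pd _ hu (by norm_num)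
  have hy : ContDiffAt ℝ 2 (dy u) p := contDiffAt_pd _ hu (by norm_num)
  have hz : ContDiffAt ℝ 2 (dz u) p := contDiffAt_pd _ hu (by norm_num)
  have htranslation : ContDiffAt ℝ 2 (dz u + dx u) p := hz.add hx
  have hscaling : ContDiffAt ℝ 2 (⇑yCoord * dy u + u) p :=
    (yCoord.contDiff.contDiffAt.mul hy).add hu₂
  have phi_eq : phi u = dz u + dx u + (⇑yCoord * dy u + u) :=
    funext fun q => add_assoc (dz u q + dx u q) _ _
  rw [phi_eq, linearizedUniversalHierarchy_add htranslation hscaling,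
    linearizedUniversalHierarchy_add hz hx, linearizedUniversalHierarchy_scaling hu,
    dz, dx, linearizedUniversalHierarchy_pd _ hu, linearizedUniversalHierarchy_pd _ hu]

end Linearization

theorem universal_hierarchy_symmetry_general {u : ℝ × ℝ × ℝ → ℝ} {p : ℝ × ℝ × ℝ}
    (hu : ContDiffAt ℝ 3 u p)
    (hsol : ∀ᶠ q in 𝓝 p, dy (dy u) q = dz u q * dy (dx u) q - dy u q * dz (dx u) q) :
    dy (dy (phi u)) p =
      dz u p * dy (dx (phi u)) p + dy (dx u) p * dz (phi u) p
        - dy u p * dz (dx (phi u)) p - dz (dx u) p * dy (phi u) p := by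
  have F_eq_zero : universalHierarchy u =ᶠ[𝓝 p] 0 := by
    filter_upwards [hsol] with q hq
    simp only [universalHierarchy, Pi.add_apply, Pi.sub_apply, Pi.mul_apply, Pi.zero_apply]
    linear_combination hq
  have pd_F_eq_zero (v : ℝ × ℝ × ℝ) : pd v (universalHierarchy u) p = 0 := by
    rw [pd_congr v F_eq_zero]
    simp [pd]
  have L_phi_eq_zero : linearizedUniversalHierarchy u (phi u) p = 0 := by
    simp [linearizedUniversalHierarchy_phi hu, dx, dy, dz, pd_F_eq_zero, F_eq_zero.self_of_nhds]
  simp only [linearizedUniversalHierarchy, Pi.add_apply, Pi.sub_apply, Pi.mul_apply]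
    at L_phi_eq_zero
  linear_combination L_phi_eq_zero

/-- If `u` is a smooth solution of the universal hierarchy equation
`u_yy = u_z·u_xy − u_y·u_xz`, then `φ = u_z + u_x + y·u_y + u` satisfies the
linearized equation `φ_yy = u_z·φ_xy + u_xy·φ_z − u_y·φ_xz − u_xz·φ_y`. -/
theorem universal_hierarchy_symmetry (u : ℝ × ℝ × ℝ → ℝ)
    (hu : ContDiff ℝ (⊤ : ℕ∞) u)
    (hsol : ∀ p : ℝ × ℝ × ℝ,
      dy (dy u) p = dz u p * dy (dx u) p - dy u p * dz (dx u) p) :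
    ∀ p : ℝ × ℝ × ℝ,
      dy (dy (phi u)) p =
        dz u p * dy (dx (phi u)) p + dy (dx u) p * dz (phi u) p
          - dy u p * dz (dx (phi u)) p - dz (dx u) p * dy (phi u) p :=
  fun _ => universal_hierarchy_symmetry_general
    (hu.contDiffAt.of_le (WithTop.coe_le_coe.2 (le_top : (3 : ℕ∞) ≤ ⊤))) (.of_forall hsol)
end

section
/- Define the rational functions X(u,p,q,w) := −w³/(w² − (p+u)w − q) and Y(u,p,q,w) := −q·w²/(w² − (p+u)w − q). Then for all real numbers x, y, u, p, q, r, s, w with w² − (p+u)w − q ≠ 0, setting t := q·r − (p+u)·s + p·q, the identity (∂X/∂u)·q + (∂X/∂p)·s + (∂X/∂q)·t + (∂X/∂w)·Y = (∂Y/∂u)·p + (∂Y/∂p)·r + (∂Y/∂q)·s + (∂Y/∂w)·X holds, all partial derivatives being taken at the point (u,p,q,w). (Here p,q,r,s,t stand for u_x,u_y,u_xx,u_xy,u_yy, t being eliminated via Equation (E1); the identity is exactly the cross-derivative compatibility condition asserting that the system w_x = X, w_y = Y is a differential covering of Equation (E1).) -/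
/-!
Write `D = w² − (p + u)w − q`, so that `X = −w³/D` and `Y = −q w²/D`. By the quotient rule,
`D² (D_y X − D_x Y)` is `w²` times an expression containing the total derivatives of `D` only in
the combination `w · D_y D − q · D_x D`. Since `w Y = q X`, the terms with `∂D/∂w` cancel there, and
what remains is `w` times the difference of the two sides of (E1).
-/

/-- `X(u,p,q,w) = −w³/(w² − (p+u)w − q)` from the covering (7) of Equation (E1). -/
noncomputable def covX (u p q w : ℝ) : ℝ := -w ^ 3 / (w ^ 2 - (p + u) * w - q)

/-- `Y(u,p,q,w) = −q·w²/(w² − (p+u)w − q)` from the covering (7) of Equation (E1). -/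
noncomputable def covY (u p q w : ℝ) : ℝ := -(q * w ^ 2) / (w ^ 2 - (p + u) * w - q)

section TotalDerivative

variable {𝕜 : Type*} [NontriviallyNormedField 𝕜]

/-- The total derivative of a function `f(u,p,q,w)`: the sum of its partial derivatives weighted by
the derivatives `du`, `dp`, `dq`, `dw` of its arguments. For `D_x` these are `u_x`, `u_xx`, `u_xy`,
`w_x`, and for `D_y` they are `u_y`, `u_xy`, `u_yy`, `w_y`. Like `deriv`, it is a junk value where a
partial derivative does not exist. -/
noncomputable def totalDeriv (f : 𝕜 → 𝕜 → 𝕜 → 𝕜 → 𝕜) (u p q w du dp dq dw : 𝕜) : 𝕜 :=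
  deriv (fun u' => f u' p q w) u * du
    + deriv (fun p' => f u p' q w) p * dp
    + deriv (fun q' => f u p q' w) q * dq
    + deriv (fun w' => f u p q w') w * dw

/-- Existence of the four partial derivatives of `f(u,p,q,w)` at a point, the condition under which
`totalDeriv` obeys the rules of calculus; joint differentiability is not required. -/
structure PartiallyDifferentiableAt (f : 𝕜 → 𝕜 → 𝕜 → 𝕜 → 𝕜) (u p q w : 𝕜) : Prop where
  first : DifferentiableAt 𝕜 (fun u' => f u' p q w) u
  second : DifferentiableAt 𝕜 (fun p' => f u p' q w) p
  third : DifferentiableAt 𝕜 (fun q' => f u p q' w) q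
  fourth : DifferentiableAt 𝕜 (fun w' => f u p q w') w

theorem totalDeriv_div {f g : 𝕜 → 𝕜 → 𝕜 → 𝕜 → 𝕜} {u p q w : 𝕜}
    (hf : PartiallyDifferentiableAt f u p q w) (hg : PartiallyDifferentiableAt g u p q w)
    (hg₀ : g u p q w ≠ 0) (du dp dq dw : 𝕜) :
    totalDeriv (fun u p q w => f u p q w / g u p q w) u p q w du dp dq dw =
      (totalDeriv f u p q w du dp dq dw * g u p q w
        - f u p q w * totalDeriv g u p q w du dp dq dw) / g u p q w ^ 2 := by
  simp only [totalDeriv, deriv_fun_div hf.first hg.first hg₀, deriv_fun_div hf.second hg.second hg₀,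
    deriv_fun_div hf.third hg.third hg₀, deriv_fun_div hf.fourth hg.fourth hg₀]
  ring

end TotalDerivative

section Covering

variable {𝕜 : Type*}

/-- The common denominator `D` of the right-hand sides of the covering. -/
def coveringDenom [Ring 𝕜] (u p q w : 𝕜) : 𝕜 := w ^ 2 - (p + u) * w - q

/-- The right-hand side `X` of `w_x = X` over an arbitrary field; `covX` is the real case. -/
def coveringX [Field 𝕜] (u p q w : 𝕜) : 𝕜 := -w ^ 3 / coveringDenom u p q w

/-- The right-hand side `Y` of `w_y = Y` over an arbitrary field; `covY` is the real case. -/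
def coveringY [Field 𝕜] (u p q w : 𝕜) : 𝕜 := -(q * w ^ 2) / coveringDenom u p q w

theorem mul_coveringY [Field 𝕜] (u p q w : 𝕜) :
    w * coveringY u p q w = q * coveringX u p q w := by
  unfold coveringX coveringY
  ring

variable [NontriviallyNormedField 𝕜]

theorem partiallyDifferentiableAt_coveringDenom (u p q w : 𝕜) :
    PartiallyDifferentiableAt coveringDenom u p q w := by
  constructor <;> unfold coveringDenom <;> fun_prop

theorem totalDeriv_coveringDenom (u p q w du dp dq dw : 𝕜) :
    totalDeriv coveringDenom u p q w du dp dq dw =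
      (2 * w - (p + u)) * dw - w * (du + dp) - dq := by
  have hu : deriv (fun u' => w ^ 2 - (p + u') * w - q) u = -w := by simp
  have hp : deriv (fun p' => w ^ 2 - (p' + u) * w - q) p = -w := by simp
  have hq : deriv (fun q' => w ^ 2 - (p + u) * w - q') q = -1 := by simp
  have hw : deriv (fun w' => w' ^ 2 - (p + u) * w' - q) w = 2 * w - (p + u) := by
    simpa using
      (((hasDerivAt_pow 2 w).fun_sub ((hasDerivAt_id w).const_mul (p + u))).sub_const q).deriv
  simp only [totalDeriv, coveringDenom, hu, hp, hq, hw]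
  ring

theorem totalDeriv_coveringX {u p q w : 𝕜} (hD : coveringDenom u p q w ≠ 0)
    (du dp dq dw : 𝕜) :
    totalDeriv coveringX u p q w du dp dq dw =
      (-(3 * w ^ 2 * dw) * coveringDenom u p q w
        + w ^ 3 * totalDeriv coveringDenom u p q w du dp dq dw) / coveringDenom u p q w ^ 2 := by
  have numerator_diff : PartiallyDifferentiableAt (fun _ _ _ w' : 𝕜 => -w' ^ 3) u p q w := by
    constructor <;> fun_prop
  have numerator_deriv :
      totalDeriv (fun _ _ _ w' : 𝕜 => -w' ^ 3) u p q w du dp dq dw = -(3 * w ^ 2 * dw) := by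
    simp [totalDeriv]
  unfold coveringX
  rw [totalDeriv_div numerator_diff (partiallyDifferentiableAt_coveringDenom u p q w) hD,
    numerator_deriv, neg_mul (w ^ 3), sub_neg_eq_add]

theorem totalDeriv_coveringY {u p q w : 𝕜} (hD : coveringDenom u p q w ≠ 0)
    (du dp dq dw : 𝕜) :
    totalDeriv coveringY u p q w du dp dq dw =
      (-(w ^ 2 * dq + 2 * q * w * dw) * coveringDenom u p q w
        + q * w ^ 2 * totalDeriv coveringDenom u p q w du dp dq dw)
          / coveringDenom u p q w ^ 2 := by
  have numerator_diff :
      PartiallyDifferentiableAt (fun _ _ q' w' : 𝕜 => -(q' * w' ^ 2)) u p q w := by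
    constructor <;> fun_prop
  have numerator_deriv : totalDeriv (fun _ _ q' w' : 𝕜 => -(q' * w' ^ 2)) u p q w du dp dq dw =
      -(w ^ 2 * dq + 2 * q * w * dw) := by
    have hq : deriv (fun q' => -(q' * w ^ 2)) q = -w ^ 2 := by simp
    have hw : deriv (fun w' => -(q * w' ^ 2)) w = -(q * (2 * w)) := by simp
    simp only [totalDeriv, deriv_const, hq, hw]
    ring
  unfold coveringY
  rw [totalDeriv_div numerator_diff (partiallyDifferentiableAt_coveringDenom u p q w) hD,
    numerator_deriv, neg_mul (q * w ^ 2), sub_neg_eq_add]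

theorem mul_totalDeriv_coveringDenom_sub {q w X Y : 𝕜} (hXY : w * Y = q * X) (u p r s t : 𝕜) :
    w * totalDeriv coveringDenom u p q w q s t Y - q * totalDeriv coveringDenom u p q w p r s X =
      w * (q * r - (p + u) * s + p * q - t) - s * coveringDenom u p q w - q * w ^ 2 := by
  simp only [totalDeriv_coveringDenom, coveringDenom]
  linear_combination (2 * w - (p + u)) * hXY

/-- The last factor of the numerator is the residual of (E1): where `w ≠ 0`, compatibility is
equivalent to the equation. -/
theorem covering_E1_compatibility_general {u p q w : 𝕜} (hD : coveringDenom u p q w ≠ 0)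
    (r s t : 𝕜) :
    totalDeriv coveringX u p q w q s t (coveringY u p q w)
        - totalDeriv coveringY u p q w p r s (coveringX u p q w) =
      w ^ 3 * (q * r - (p + u) * s + p * q - t) / coveringDenom u p q w ^ 2 := by
  have hX : coveringX u p q w * coveringDenom u p q w = -w ^ 3 := div_mul_cancel₀ _ hD
  have hY : coveringY u p q w * coveringDenom u p q w = -(q * w ^ 2) := div_mul_cancel₀ _ hD
  have hDenom := mul_totalDeriv_coveringDenom_sub (mul_coveringY u p q w) u p r s t
  rw [totalDeriv_coveringX hD, totalDeriv_coveringY hD, ← sub_div]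
  congr 1
  linear_combination w ^ 2 * hDenom - 3 * w ^ 2 * hY + 2 * q * w * hX

end Covering

/-- Cross-derivative compatibility `D_y(X) = D_x(Y)` of the covering
`w_x = X`, `w_y = Y` over Equation (E1)
`u_yy = u_y·u_xx − (u_x + u)·u_xy + u_x·u_y`, where `p,q,r,s,t` stand for
`u_x,u_y,u_xx,u_xy,u_yy` and `t = q·r − (p+u)·s + p·q` is eliminated via (E1). -/
theorem covering_E1_compatibility (x y u p q r s w : ℝ)
    (hD : w ^ 2 - (p + u) * w - q ≠ 0) :
    deriv (fun u' => covX u' p q w) u * q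
      + deriv (fun p' => covX u p' q w) p * s
      + deriv (fun q' => covX u p q' w) q * (q * r - (p + u) * s + p * q)
      + deriv (fun w' => covX u p q w') w * covY u p q w
    = deriv (fun u' => covY u' p q w) u * p
      + deriv (fun p' => covY u p' q w) p * r
      + deriv (fun q' => covY u p q' w) q * s
      + deriv (fun w' => covY u p q w') w * covX u p q w :=
  sub_eq_zero.1 <| (covering_E1_compatibility_general hD r s _).trans (by simp)
end

section
/- Let g₁ be the 4-dimensional real Lie algebra with basis e₁, e₂, e₃, e₄ and Lie brackets determined by [e₁,e₂] = e₁, [e₂,e₄] = e₄, [e₃,e₄] = −e₄, all other brackets of basis vectors being zero (up to antisymmetry). Let g₂ be the 4-dimensional real Lie algebra with basis f₁, f₂, f₃, f₄ and Lie brackets determined by [f₁,f₄] = −f₁, [f₂,f₃] = −f₁, [f₂,f₄] = −(2/3)·f₂, [f₃,f₄] = −(1/3)·f₃, all other brackets of basis vectors being zero (up to antisymmetry). Then there is no Lie algebra isomorphism between g₁ and g₂ (indeed the derived subalgebra [g₁,g₁] has dimension 2 while [g₂,g₂] has dimension 3). -/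
/-- The bracket of the 4-dimensional Lie algebra `g₁` in the basis
`e₁, e₂, e₃, e₄` (coordinates `x 0, x 1, x 2, x 3`), determined by bilinearity
and `[e₁,e₂] = e₁`, `[e₂,e₄] = e₄`, `[e₃,e₄] = −e₄`, all other brackets of
basis vectors being zero. -/
def bracket₁ (x y : Fin 4 → ℝ) : Fin 4 → ℝ :=
  ![x 0 * y 1 - x 1 * y 0, 0, 0,
    (x 1 * y 3 - x 3 * y 1) - (x 2 * y 3 - x 3 * y 2)]

/-- The bracket of the 4-dimensional Lie algebra `g₂` in the basis
`f₁, f₂, f₃, f₄` (coordinates `x 0, x 1, x 2, x 3`), determined by bilinearity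
and `[f₁,f₄] = −f₁`, `[f₂,f₃] = −f₁`, `[f₂,f₄] = −(2/3)·f₂`,
`[f₃,f₄] = −(1/3)·f₃`, all other brackets of basis vectors being zero. -/
noncomputable def bracket₂ (x y : Fin 4 → ℝ) : Fin 4 → ℝ :=
  ![-(x 0 * y 3 - x 3 * y 0) - (x 1 * y 2 - x 2 * y 1),
    -(2 / 3) * (x 1 * y 3 - x 3 * y 1),
    -(1 / 3) * (x 2 * y 3 - x 3 * y 2), 0]

/-!
The dimension of the derived subalgebra is an isomorphism invariant. Both derived subalgebras are
coordinate subspaces, and each consists of brackets with a single fixed element: `e₂` in `g₁`,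
and `f₄` in `g₂`, where `ad f₄` is diagonal with nonzero entries on the span of `f₁, f₂, f₃`.
-/

open Module

section DerivedSubmodule

variable {R M N : Type*} [Semiring R] [AddCommMonoid M] [Module R M] [AddCommMonoid N] [Module R N]

variable (R) in
/-- The derived subalgebra of a module with a bracket `b`, as a submodule. The bracket is an
arbitrary binary operation, so that it applies to brackets not packaged as a `LieRing`. -/
def derivedSubmodule (b : M → M → M) : Submodule R M :=
  Submodule.span R {z | ∃ x y, z = b x y}

theorem map_derivedSubmodule {b : M → M → M} {b' : N → N → N} {f : M →ₗ[R] N}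
    (hf : Function.Surjective f) (hb : ∀ x y, f (b x y) = b' (f x) (f y)) :
    (derivedSubmodule R b).map f = derivedSubmodule R b' := by
  rw [derivedSubmodule, derivedSubmodule, Submodule.map_span]
  congr 1
  ext z
  constructor
  · rintro ⟨_, ⟨x, y, rfl⟩, rfl⟩
    exact ⟨f x, f y, hb x y⟩
  · rintro ⟨x', y', rfl⟩
    obtain ⟨x, rfl⟩ := hf x'
    obtain ⟨y, rfl⟩ := hf y'
    exact ⟨b x y, ⟨x, y, rfl⟩, hb x y⟩

theorem finrank_derivedSubmodule_eq_of_linearEquiv {b : M → M → M} {b' : N → N → N}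
    (e : M ≃ₗ[R] N) (hb : ∀ x y, e (b x y) = b' (e x) (e y)) :
    finrank R (derivedSubmodule R b) = finrank R (derivedSubmodule R b') := by
  rw [← map_derivedSubmodule (f := e.toLinearMap) e.surjective hb]
  exact (e.finrank_map_eq _).symm

theorem derivedSubmodule_eq_of_mem_iff {b : M → M → M} {p : Submodule R M}
    (h : ∀ z, z ∈ p ↔ ∃ x y, z = b x y) : derivedSubmodule R b = p :=
  (congrArg (Submodule.span R) (Set.ext fun z => (h z).symm)).trans p.span_eq

end DerivedSubmodule

theorem finrank_iInf_ker_proj {R ι : Type*} [Semiring R] [StrongRankCondition R] [Fintype ι]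
    [DecidableEq ι] (s : Finset ι) :
    finrank R (⨅ i ∈ s, LinearMap.ker (LinearMap.proj i : (ι → R) →ₗ[R] R) :
      Submodule R (ι → R)) = sᶜ.card := by
  have e := LinearMap.iInfKerProjEquiv R (fun _ : ι => R) (I := ↑sᶜ) (J := ↑s)
    (by simpa using disjoint_compl_left) (by simp)
  exact e.finrank_eq.trans (by simp [Finset.card_compl])

theorem derivedSubmodule_bracket₁ :
    derivedSubmodule ℝ bracket₁ =
      ⨅ i ∈ ({1, 2} : Finset (Fin 4)), LinearMap.ker (LinearMap.proj i) := by
  refine derivedSubmodule_eq_of_mem_iff fun z => ⟨fun hz => ?_, ?_⟩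
  · obtain ⟨hz₁, hz₂⟩ : z 1 = 0 ∧ z 2 = 0 := by simpa using hz
    refine ⟨![z 0, 0, 0, -z 3], ![0, 1, 0, 0], ?_⟩
    ext i
    fin_cases i <;> simp [bracket₁, hz₁, hz₂]
  · rintro ⟨x, y, rfl⟩
    simp [bracket₁]

theorem derivedSubmodule_bracket₂ :
    derivedSubmodule ℝ bracket₂ =
      ⨅ i ∈ ({3} : Finset (Fin 4)), LinearMap.ker (LinearMap.proj i) := by
  refine derivedSubmodule_eq_of_mem_iff fun z => ⟨fun hz => ?_, ?_⟩
  · have hz₃ : z 3 = 0 := by simpa using hz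
    refine ⟨![-z 0, -(3 / 2) * z 1, -3 * z 2, 0], ![0, 0, 0, 1], ?_⟩
    ext i
    fin_cases i <;> simp [bracket₂, hz₃, ← mul_assoc]
  · rintro ⟨x, y, rfl⟩
    simp [bracket₂]

theorem finrank_derivedSubmodule_bracket₁ : finrank ℝ (derivedSubmodule ℝ bracket₁) = 2 := by
  rw [derivedSubmodule_bracket₁, finrank_iInf_ker_proj]
  rfl

theorem finrank_derivedSubmodule_bracket₂ : finrank ℝ (derivedSubmodule ℝ bracket₂) = 3 := by
  rw [derivedSubmodule_bracket₂, finrank_iInf_ker_proj]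
  rfl

/-- There is no Lie algebra isomorphism between `g₁` and `g₂`, i.e. no linear
equivalence of the underlying vector space `ℝ⁴` intertwining the two brackets;
indeed, the derived subalgebra of `g₁` has dimension `2` while that of `g₂`
has dimension `3`. -/
theorem g1_not_isomorphic_g2 :
    (¬ ∃ e : (Fin 4 → ℝ) ≃ₗ[ℝ] (Fin 4 → ℝ),
        ∀ x y : Fin 4 → ℝ, e (bracket₁ x y) = bracket₂ (e x) (e y))
      ∧ Module.finrank ℝ
          (Submodule.span ℝ {z : Fin 4 → ℝ | ∃ x y, z = bracket₁ x y}) = 2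
      ∧ Module.finrank ℝ
          (Submodule.span ℝ {z : Fin 4 → ℝ | ∃ x y, z = bracket₂ x y}) = 3 := by
  refine ⟨?_, finrank_derivedSubmodule_bracket₁, finrank_derivedSubmodule_bracket₂⟩
  rintro ⟨e, he⟩
  have hfinrank := finrank_derivedSubmodule_eq_of_linearEquiv e he
  rw [finrank_derivedSubmodule_bracket₁, finrank_derivedSubmodule_bracket₂] at hfinrank
  norm_num at hfinrank
end
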